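/- Let Λ be a finite dimensional algebra and T a tilting Λ-module with minimal projective resolution 0 → Q₁ → Q₀ → T → 0. Then (add Q₁) ∩ (add Q₀) = 0 and add(Q₀ ⊕ Q₁) = add Λ. -/

import Mathlib

/- STATEMENT 1: Let `Λ` be a finite dimensional algebra and `T` a tilting `Λ`-module with
minimal projective resolution `0 → Q₁ → Q₀ → T → 0`.  Then `(add Q₁) ∩ (add Q₀) = 0`
and `add (Q₀ ⊕ Q₁) = add Λ`. -/

open CategoryTheory

/-- `X` lies in `add M`: `X` is a direct summand of a finite direct sum of copies of `M`. -/
def InAdd (R : Type) [Ring R] (M : Type) [AddCommGroup M] [Module R M]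
    (X : Type) [AddCommGroup X] [Module R X] : Prop :=
  ∃ (m : ℕ) (Y : ModuleCat.{0} R), Nonempty ((X × Y) ≃ₗ[R] (Fin m → M))

/-- `T` is a (classical) tilting `R`-module: `T` is finitely generated, has projective
dimension at most 1, `Ext¹(T,T) = 0` (expressed by the lifting property along any
projective presentation of `T`), and there is an exact sequence `0 → R → T₀ → T₁ → 0`
with `T₀, T₁ ∈ add T`. -/
structure IsTilting (R : Type) [Ring R] (T : Type) [AddCommGroup T] [Module R T] : Prop where
  finite : Module.Finite R T
  pd_le_one : ∃ (Q0 Q1 : ModuleCat.{0} R) (i : Q1 →ₗ[R] Q0) (p : Q0 →ₗ[R] T),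
    Module.Projective R Q0 ∧ Module.Projective R Q1 ∧
    Function.Injective i ∧ Function.Surjective p ∧ Function.Exact i p
  ext_self_vanish : ∀ (Q0 Q1 : ModuleCat.{0} R) (i : Q1 →ₗ[R] Q0) (p : Q0 →ₗ[R] T),
    Module.Projective R Q0 → Module.Projective R Q1 →
    Function.Injective i → Function.Surjective p → Function.Exact i p →
    ∀ φ : Q1 →ₗ[R] T, ∃ ψ : Q0 →ₗ[R] T, ψ.comp i = φ
  coresolution : ∃ (T0 T1 : ModuleCat.{0} R) (a : R →ₗ[R] T0) (b : T0 →ₗ[R] T1),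
    InAdd R T T0 ∧ InAdd R T T1 ∧
    Function.Injective a ∧ Function.Surjective b ∧ Function.Exact a b

/-!
Minimality puts `ker p`, hence the image of `i`, into `rad Q₀`. Since `Ext¹(T, T) = 0`, every map
`f : Q₁ → Q₀` has the form `g ∘ i` plus a map into `ker p`, so it lands in `rad Q₀` as well. The
identity of a module in `add Q₁ ∩ add Q₀` is a sum of maps factoring through such maps `f`, so that
module equals its radical and vanishes by Nakayama.

For `Λ ∈ add (Q₀ ⊕ Q₁)`, enlarge the coresolution to `0 → Λ → E → Tⁿ → 0` with `E ∈ add T`. Lifting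
`Q₀ⁿ → Tⁿ` to `E` gives the projective presentation `Q₁ⁿ → Λ ⊕ Q₀ⁿ → E → 0`. As `E` is a retract of
some `Tᵐ`, comparing this presentation with `Q₀ᵐ → Tᵐ` shows that the identity of `Λ ⊕ Q₀ⁿ` is
homotopic to a map factoring through `Q₀ᵐ`, so `Λ ⊕ Q₀ⁿ` is a direct summand of `Q₀ᵐ ⊕ Q₁ⁿ`.
-/

section Superfluous

variable {R M N P : Type*} [Ring R] [AddCommGroup M] [Module R M] [AddCommGroup N] [Module R N]
  [AddCommGroup P] [Module R P]

/-- A submodule is superfluous (or small) if it can be omitted from every generating family of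
submodules. A surjection from a projective module is a projective cover exactly when its kernel
is superfluous. -/
def IsSuperfluous (S : Submodule R M) : Prop :=
  ∀ N : Submodule R M, N ⊔ S = ⊤ → N = ⊤

namespace IsSuperfluous

theorem le_jacobson {S : Submodule R M} (hS : IsSuperfluous S) : S ≤ Module.jacobson R M := by
  refine le_sInf fun N hN => ?_
  by_contra hSN
  exact hN.1 (hS N (hN.2 _ (left_lt_sup.2 hSN)))

theorem surjective_of_comp {p : M →ₗ[R] N} (hker : IsSuperfluous (LinearMap.ker p))
    {g : P →ₗ[R] M} (hpg : Function.Surjective (p ∘ₗ g)) : Function.Surjective g := by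
  refine LinearMap.range_eq_top.1 (hker _ (eq_top_iff.2 fun x _ => ?_))
  obtain ⟨y, hy⟩ := hpg (p x)
  rw [LinearMap.comp_apply] at hy
  rw [← add_sub_cancel (g y) x]
  exact Submodule.add_mem_sup ⟨y, rfl⟩ (by rw [LinearMap.mem_ker, map_sub, hy, sub_self])

theorem finite_of_surjective [Module.Finite R N] {p : M →ₗ[R] N}
    (hker : IsSuperfluous (LinearMap.ker p)) (hp : Function.Surjective p) :
    Module.Finite R M := by
  obtain ⟨n, f, hf⟩ := Module.Finite.exists_fin' R N
  obtain ⟨g, rfl⟩ := Module.projective_lifting_property p f hp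
  exact Module.Finite.of_surjective g (hker.surjective_of_comp hf)

end IsSuperfluous

end Superfluous

section Presentation

variable {R : Type*} [Ring R]

theorem projective_pi {ι : Type*} [Finite ι] (M : ι → Type*) [∀ k, AddCommGroup (M k)]
    [∀ k, Module R (M k)] [∀ k, Module.Projective R (M k)] : Module.Projective R (∀ k, M k) := by
  have := Fintype.ofFinite ι
  exact Module.Projective.of_equiv (DFinsupp.linearEquivFunOnFintype (R := R) (M := M))

variable {L M N P E F P₀ P₁ Q₀ Q₁ : Type*}
  [AddCommGroup L] [Module R L] [AddCommGroup M] [Module R M] [AddCommGroup N] [Module R N]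
  [AddCommGroup P] [Module R P] [AddCommGroup E] [Module R E] [AddCommGroup F] [Module R F]
  [AddCommGroup P₀] [Module R P₀] [AddCommGroup P₁] [Module R P₁]
  [AddCommGroup Q₀] [Module R Q₀] [AddCommGroup Q₁] [Module R Q₁]

theorem exact_compLeft {f : L →ₗ[R] M} {g : M →ₗ[R] N} (h : Function.Exact f g) (ι : Type*) :
    Function.Exact (f.compLeft ι) (g.compLeft ι) := by
  intro x
  refine ⟨fun hx => ?_, ?_⟩
  · choose y hy using fun k => (h (x k)).1 (congrFun hx k)
    exact ⟨y, funext hy⟩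
  · rintro ⟨y, rfl⟩
    exact funext fun k => h.apply_apply_eq_zero (y k)

theorem exists_comp_eq_of_exact [Module.Projective R P] {f : L →ₗ[R] M} {g : M →ₗ[R] N}
    (hfg : Function.Exact f g) {h : P →ₗ[R] M} (hgh : g ∘ₗ h = 0) :
    ∃ k : P →ₗ[R] L, f ∘ₗ k = h := by
  have hrange : ∀ x, h x ∈ LinearMap.range f := fun x => (hfg _).1 (LinearMap.congr_fun hgh x)
  obtain ⟨k, hk⟩ := Module.projective_lifting_property f.rangeRestrict
    (h.codRestrict _ hrange) f.surjective_rangeRestrict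
  exact ⟨k, LinearMap.ext fun x => congrArg Subtype.val (LinearMap.congr_fun hk x)⟩

theorem finite_of_exact [Module.Finite R M] [Module.FinitePresentation R N] {f : L →ₗ[R] M}
    {g : M →ₗ[R] N} (hf : Function.Injective f) (hg : Function.Surjective g)
    (hfg : Function.Exact f g) : Module.Finite R L := by
  have hrange : (LinearMap.range f).FG :=
    hfg.linearMap_ker_eq ▸ Module.FinitePresentation.fg_ker g hg
  have := Module.Finite.iff_fg.2 hrange
  exact Module.Finite.equiv (LinearEquiv.ofInjective f hf).symm

theorem exists_presentation_prod_of_exact [Module.Projective R Q₀] [Module.Projective R Q₁]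
    {a : L →ₗ[R] E} {b : E →ₗ[R] F} (ha : Function.Injective a) (hb : Function.Surjective b)
    (hab : Function.Exact a b) {i : Q₁ →ₗ[R] Q₀} {p : Q₀ →ₗ[R] F} (hp : Function.Surjective p)
    (hip : Function.Exact i p) :
    ∃ (d : Q₁ →ₗ[R] L × Q₀) (e : L × Q₀ →ₗ[R] E), Function.Surjective e ∧ Function.Exact d e := by
  obtain ⟨u, rfl⟩ := Module.projective_lifting_property b p hb
  obtain ⟨v, hv⟩ : ∃ v : Q₁ →ₗ[R] L, a ∘ₗ v = u ∘ₗ i :=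
    exists_comp_eq_of_exact hab hip.linearMap_comp_eq_zero
  have hv' (y : Q₁) : a (v y) = u (i y) := LinearMap.congr_fun hv y
  refine ⟨(-v).prod i, a.coprod u, fun x => ?_, fun ⟨l, q⟩ => ⟨fun hlq => ?_, ?_⟩⟩
  · obtain ⟨q, hq⟩ := hp (b x)
    obtain ⟨l, hl⟩ := (hab (x - u q)).1 (by rw [map_sub, ← hq, LinearMap.comp_apply, sub_self])
    exact ⟨(l, q), by simp [hl]⟩
  · have hlq' : a l + u q = 0 := hlq
    obtain ⟨y, rfl⟩ := (hip q).1 (by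
      rw [LinearMap.comp_apply, eq_neg_of_add_eq_zero_right hlq', map_neg,
        hab.apply_apply_eq_zero, neg_zero])
    have hl : -v y = l := ha (by rw [map_neg, hv', eq_neg_of_add_eq_zero_left hlq'])
    exact ⟨y, by simp [hl]⟩
  · rintro ⟨y, hy⟩
    simp [← hy, hv']

theorem exists_retract_prod_of_exact [Module.Projective R P₀] [Module.Projective R Q₀]
    {d : P₁ →ₗ[R] P₀} {e : P₀ →ₗ[R] E} (he : Function.Surjective e) (hde : Function.Exact d e)
    {p : Q₀ →ₗ[R] F} (hp : Function.Surjective p) {s : E →ₗ[R] F} {r : F →ₗ[R] E}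
    (hrs : r ∘ₗ s = LinearMap.id) :
    ∃ (σ : P₀ →ₗ[R] Q₀ × P₁) (ρ : Q₀ × P₁ →ₗ[R] P₀), ρ ∘ₗ σ = LinearMap.id := by
  obtain ⟨s₀, hs₀⟩ := Module.projective_lifting_property p (s ∘ₗ e) hp
  obtain ⟨r₀, hr₀⟩ := Module.projective_lifting_property e (r ∘ₗ p) he
  have hnull : e ∘ₗ (LinearMap.id - r₀ ∘ₗ s₀) = 0 := by
    rw [LinearMap.comp_sub, ← LinearMap.comp_assoc, hr₀, LinearMap.comp_assoc, hs₀,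
      ← LinearMap.comp_assoc, hrs, LinearMap.comp_id, LinearMap.id_comp, sub_self]
  obtain ⟨h, hh⟩ := exists_comp_eq_of_exact hde hnull
  exact ⟨s₀.prod h, r₀.coprod d, by rw [LinearMap.coprod_comp_prod, hh, add_sub_cancel]⟩

theorem range_le_jacobson_of_forall_exists_comp_eq [Module.Projective R Q₀]
    {i : Q₁ →ₗ[R] Q₀} {p : Q₀ →ₗ[R] M} (hp : Function.Surjective p) (hip : Function.Exact i p)
    (hker : IsSuperfluous (LinearMap.ker p))
    (hext : ∀ φ : Q₁ →ₗ[R] M, ∃ ψ : Q₀ →ₗ[R] M, ψ ∘ₗ i = φ) (f : Q₁ →ₗ[R] Q₀) :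
    LinearMap.range f ≤ Module.jacobson R Q₀ := by
  obtain ⟨ψ, hψ⟩ := hext (p ∘ₗ f)
  obtain ⟨g, rfl⟩ := Module.projective_lifting_property p ψ hp
  rintro _ ⟨x, rfl⟩
  have hdiff : f x - g (i x) ∈ LinearMap.ker p := by
    rw [LinearMap.mem_ker, map_sub, sub_eq_zero]
    exact (LinearMap.congr_fun hψ x).symm
  have hi : i x ∈ Module.jacobson R Q₀ := hker.le_jacobson (hip.apply_apply_eq_zero x)
  rw [← sub_add_cancel (f x) (g (i x))]
  exact add_mem (hker.le_jacobson hdiff) (Module.le_comap_jacobson g hi)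

end Presentation

section Add

variable {R : Type} [Ring R] {L M N X Y : Type} [AddCommGroup L] [Module R L]
  [AddCommGroup M] [Module R M] [AddCommGroup N] [Module R N]
  [AddCommGroup X] [Module R X] [AddCommGroup Y] [Module R Y]

theorem inAdd_of_retract_pi {ι : Type} [Finite ι] (s : X →ₗ[R] ι → M) (r : (ι → M) →ₗ[R] X)
    (hrs : r ∘ₗ s = LinearMap.id) : InAdd R M X := by
  let split : (LinearMap.ker r × X) ≃ₗ[R] (ι → M) :=
    lequivProdOfRightSplitExact (LinearMap.ker r).injective_subtype
      (LinearMap.ker r).range_subtype hrs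
  exact ⟨Nat.card ι, ModuleCat.of R (LinearMap.ker r), ⟨LinearEquiv.prodComm R X _ ≪≫ₗ split ≪≫ₗ
    LinearEquiv.funCongrLeft R M (Finite.equivFin ι).symm⟩⟩

theorem inAdd_self : InAdd R M M :=
  inAdd_of_retract_pi (ι := Unit) (LinearMap.pi fun _ => LinearMap.id) (LinearMap.proj ()) rfl

theorem inAdd_of_finite_of_projective [Module.Finite R X] [Module.Projective R X] :
    InAdd R R X := by
  obtain ⟨n, f, hf⟩ := Module.Finite.exists_fin' R X
  obtain ⟨s, hs⟩ := Module.projective_lifting_property f LinearMap.id hf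
  exact inAdd_of_retract_pi s f hs

namespace InAdd

theorem exists_retract (h : InAdd R M X) :
    ∃ (m : ℕ) (s : X →ₗ[R] Fin m → M) (r : (Fin m → M) →ₗ[R] X), r ∘ₗ s = LinearMap.id := by
  obtain ⟨m, Y, ⟨e⟩⟩ := h
  exact ⟨m, e ∘ₗ LinearMap.inl R X Y, LinearMap.fst R X Y ∘ₗ e.symm,
    LinearMap.ext fun x => by simp⟩

theorem exists_sum_apply_eq_self (h : InAdd R M X) :
    ∃ (m : ℕ) (s : Fin m → X →ₗ[R] M) (r : Fin m → M →ₗ[R] X), ∀ x, ∑ k, r k (s k x) = x := by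
  obtain ⟨m, s, r, hrs⟩ := h.exists_retract
  refine ⟨m, fun k => LinearMap.proj k ∘ₗ s,
    fun k => r ∘ₗ LinearMap.single R (fun _ => M) k, fun x => ?_⟩
  calc ∑ k, r (Pi.single k (s x k)) = r (s x) := by
        rw [← map_sum, LinearMap.sum_single_apply]
    _ = x := LinearMap.congr_fun hrs x

theorem of_retract (h : InAdd R M N) (s : X →ₗ[R] N) (r : N →ₗ[R] X)
    (hrs : r ∘ₗ s = LinearMap.id) : InAdd R M X := by
  obtain ⟨m, s', r', hrs'⟩ := h.exists_retract
  refine inAdd_of_retract_pi (s' ∘ₗ s) (r ∘ₗ r') ?_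
  rw [LinearMap.comp_assoc, ← LinearMap.comp_assoc s, hrs', LinearMap.id_comp, hrs]

theorem prod (hX : InAdd R M X) (hY : InAdd R M Y) : InAdd R M (X × Y) := by
  obtain ⟨m, s, r, hrs⟩ := hX.exists_retract
  obtain ⟨n, s', r', hrs'⟩ := hY.exists_retract
  let e := LinearEquiv.sumArrowLequivProdArrow (Fin m) (Fin n) R M
  refine inAdd_of_retract_pi (e.symm ∘ₗ s.prodMap s') (r.prodMap r' ∘ₗ e.toLinearMap) ?_
  rw [LinearMap.comp_assoc, ← LinearMap.comp_assoc _ _ e.toLinearMap, LinearEquiv.comp_symm,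
    LinearMap.id_comp, LinearMap.prodMap_comp, hrs, hrs', LinearMap.prodMap_id]

theorem pi (hX : InAdd R M X) (ι : Type) [Finite ι] : InAdd R M (ι → X) := by
  obtain ⟨m, s, r, hrs⟩ := hX.exists_retract
  let e := LinearEquiv.curry R M ι (Fin m)
  refine inAdd_of_retract_pi (e.symm ∘ₗ s.compLeft ι) (r.compLeft ι ∘ₗ e.toLinearMap) ?_
  ext x k
  simpa using LinearMap.congr_fun hrs (x k)

theorem trans (hN : InAdd R M N) (hX : InAdd R N X) : InAdd R M X := by
  obtain ⟨n, s, r, hrs⟩ := hX.exists_retract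
  exact (hN.pi (Fin n)).of_retract s r hrs

theorem finite [Module.Finite R M] (h : InAdd R M X) : Module.Finite R X := by
  obtain ⟨m, s, r, hrs⟩ := h.exists_retract
  exact Module.Finite.of_surjective r fun x => ⟨s x, LinearMap.congr_fun hrs x⟩

theorem range_le (h : InAdd R M X) {S : Submodule R N}
    (hS : ∀ f : M →ₗ[R] N, LinearMap.range f ≤ S) (f : X →ₗ[R] N) : LinearMap.range f ≤ S := by
  obtain ⟨m, s, r, hsum⟩ := h.exists_sum_apply_eq_self
  rintro _ ⟨x, rfl⟩
  rw [← hsum x, map_sum]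
  exact sum_mem fun k _ => hS (f ∘ₗ r k) ⟨s k x, rfl⟩

theorem range_le_jacobson (h : InAdd R N X)
    (hN : ∀ f : M →ₗ[R] N, LinearMap.range f ≤ Module.jacobson R N) (f : M →ₗ[R] X) :
    LinearMap.range f ≤ Module.jacobson R X := by
  obtain ⟨n, s, r, hsum⟩ := h.exists_sum_apply_eq_self
  rintro _ ⟨x, rfl⟩
  rw [← hsum (f x)]
  exact sum_mem fun k _ => Module.le_comap_jacobson (r k) (hN (s k ∘ₗ f) ⟨x, rfl⟩)

theorem subsingleton [Module.Finite R N]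
    (hMN : ∀ f : M →ₗ[R] N, LinearMap.range f ≤ Module.jacobson R N)
    (hM : InAdd R M X) (hN : InAdd R N X) : Subsingleton X := by
  have := hN.finite
  have hid := hM.range_le (hN.range_le_jacobson hMN) LinearMap.id
  by_contra hX
  have := not_subsingleton_iff_nontrivial.1 hX
  exact (Module.jacobson_lt_top R X).not_ge (LinearMap.range_id (R := R) (M := X) ▸ hid)

variable {T T₀ T₁ Q₀ Q₁ : Type} [AddCommGroup T] [Module R T]
  [AddCommGroup T₀] [Module R T₀] [AddCommGroup T₁] [Module R T₁]
  [AddCommGroup Q₀] [Module R Q₀] [AddCommGroup Q₁] [Module R Q₁]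

theorem exists_exact_pi (h₀ : InAdd R T T₀) (h₁ : InAdd R T T₁)
    {a : L →ₗ[R] T₀} {b : T₀ →ₗ[R] T₁} (ha : Function.Injective a) (hb : Function.Surjective b)
    (hab : Function.Exact a b) :
    ∃ (n : ℕ) (E : ModuleCat.{0} R) (a' : L →ₗ[R] E) (b' : E →ₗ[R] Fin n → T),
      InAdd R T E ∧ Function.Injective a' ∧ Function.Surjective b' ∧ Function.Exact a' b' := by
  obtain ⟨n, Y, ⟨e⟩⟩ := h₁
  have hY : InAdd R T Y := ⟨n, ModuleCat.of R T₁, ⟨LinearEquiv.prodComm R Y T₁ ≪≫ₗ e⟩⟩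
  refine ⟨n, ModuleCat.of R (T₀ × Y), LinearMap.inl R T₀ Y ∘ₗ a, e ∘ₗ b.prodMap LinearMap.id,
    h₀.prod hY, LinearMap.inl_injective.comp ha,
    e.surjective.comp (hb.prodMap Function.surjective_id), fun ⟨x, y⟩ => ?_⟩
  calc e (b x, y) = 0 ↔ b x = 0 ∧ y = 0 := by rw [e.map_eq_zero_iff, Prod.mk_eq_zero]
    _ ↔ (∃ l, a l = x) ∧ y = 0 := and_congr_left' (hab x)
    _ ↔ ∃ l, (a l, (0 : Y)) = (x, y) := by simp only [Prod.mk.injEq, exists_and_right, eq_comm]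

theorem of_coresolution [Module.Projective R L] [Module.Projective R Q₀] [Module.Projective R Q₁]
    {i : Q₁ →ₗ[R] Q₀} {p : Q₀ →ₗ[R] T} (hp : Function.Surjective p) (hip : Function.Exact i p)
    (h₀ : InAdd R T T₀) (h₁ : InAdd R T T₁) {a : L →ₗ[R] T₀} {b : T₀ →ₗ[R] T₁}
    (ha : Function.Injective a) (hb : Function.Surjective b) (hab : Function.Exact a b) :
    InAdd R (Q₀ × Q₁) L := by
  obtain ⟨n, E, a', b', hE, ha', hb', hab'⟩ := h₀.exists_exact_pi h₁ ha hb hab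
  obtain ⟨m, s, r, hrs⟩ := hE.exists_retract
  have (k : ℕ) : Module.Projective R (Fin k → Q₀) := projective_pi _
  have : Module.Projective R (Fin n → Q₁) := projective_pi _
  obtain ⟨d, e, he, hde⟩ := exists_presentation_prod_of_exact ha' hb' hab' (p := p.compLeft (Fin n))
    hp.comp_left (exact_compLeft hip (Fin n))
  obtain ⟨σ, ρ, hρσ⟩ := exists_retract_prod_of_exact he hde (p := p.compLeft (Fin m))
    hp.comp_left hrs
  have hQ₀ : InAdd R (Q₀ × Q₁) Q₀ :=
    inAdd_self.of_retract (LinearMap.inl R Q₀ Q₁) (LinearMap.fst R Q₀ Q₁)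
      (LinearMap.fst_comp_inl ..)
  have hQ₁ : InAdd R (Q₀ × Q₁) Q₁ :=
    inAdd_self.of_retract (LinearMap.inr R Q₀ Q₁) (LinearMap.snd R Q₀ Q₁)
      (LinearMap.snd_comp_inr ..)
  have hLQ : InAdd R (Q₀ × Q₁) (L × (Fin n → Q₀)) :=
    ((hQ₀.pi (Fin m)).prod (hQ₁.pi (Fin n))).of_retract σ ρ hρσ
  exact hLQ.of_retract (LinearMap.inl R L _) (LinearMap.fst R L _) (LinearMap.fst_comp_inl ..)

end InAdd

end Add

theorem stmt1_general {R T Q₀ Q₁ : Type} [Ring R] [AddCommGroup T] [Module R T]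
    [AddCommGroup Q₀] [Module R Q₀] [AddCommGroup Q₁] [Module R Q₁]
    [Module.FinitePresentation R T] [Module.Projective R Q₀] [Module.Projective R Q₁]
    (hT : IsTilting R T) {i : Q₁ →ₗ[R] Q₀} {p : Q₀ →ₗ[R] T} (hi : Function.Injective i)
    (hp : Function.Surjective p) (hip : Function.Exact i p)
    (hker : IsSuperfluous (LinearMap.ker p)) :
    (∀ M : ModuleCat.{0} R, InAdd R Q₁ M → InAdd R Q₀ M → Subsingleton M) ∧
    (∀ M : ModuleCat.{0} R, InAdd R (Q₀ × Q₁) M ↔ InAdd R R M) := by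
  have : Module.Finite R Q₀ := hker.finite_of_surjective hp
  have : Module.Finite R Q₁ := finite_of_exact hi hp hip
  have hext := hT.ext_self_vanish (ModuleCat.of R Q₀) (ModuleCat.of R Q₁) i p
    inferInstance inferInstance hi hp hip
  have hrad := range_le_jacobson_of_forall_exists_comp_eq hp hip hker hext
  obtain ⟨T₀, T₁, a, b, h₀, h₁, ha, hb, hab⟩ := hT.coresolution
  have hR : InAdd R (Q₀ × Q₁) R := .of_coresolution hp hip h₀ h₁ ha hb hab
  exact ⟨fun _ => InAdd.subsingleton hrad, fun _ => ⟨inAdd_of_finite_of_projective.trans, hR.trans⟩⟩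

theorem stmt1 (K Λ : Type) [Field K] [Ring Λ] [Algebra K Λ] [FiniteDimensional K Λ]
    (T : Type) [AddCommGroup T] [Module Λ T] (hT : IsTilting Λ T)
    (Q0 Q1 : ModuleCat.{0} Λ) (i : Q1 →ₗ[Λ] Q0) (p : Q0 →ₗ[Λ] T)
    (hQ0 : Module.Projective Λ Q0) (hQ1 : Module.Projective Λ Q1)
    (hi : Function.Injective i) (hp : Function.Surjective p)
    (hexact : Function.Exact i p)
    -- minimality: `p : Q₀ → T` is a projective cover, i.e. `ker p` is superfluous
    (hmin : ∀ N : Submodule Λ Q0, N ⊔ LinearMap.ker p = ⊤ → N = ⊤) :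
    (∀ M : ModuleCat.{0} Λ, InAdd Λ Q1 M → InAdd Λ Q0 M → Subsingleton M) ∧
    (∀ M : ModuleCat.{0} Λ, InAdd Λ (Q0 × Q1 : Type) M ↔ InAdd Λ Λ M) := by
  have := hT.finite
  have : IsNoetherianRing Λ := isNoetherian_of_tower K inferInstance
  have := Module.finitePresentation_of_finite Λ T
  exact stmt1_general hT hi hp hexact hmin
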